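/- Functional relation between Pieri coefficients and operator coefficients (three-parameter case): for every λ ∈ Λ and every pair of disjoint subsets J_+, J_− ⊆ {1,…,n} such that λ + e_{J_+} − e_{J_−} ∈ Λ, one has V_{J_+,J_−}(λ) · h(λ + e_{J_+} − e_{J_−}) = W_{J_+,J_−}(λ) · h(λ). -/

import Mathlib

open Finset Complex MeasureTheory

noncomputable section

namespace QB

/-- The partition predicate: `lam` is weakly decreasing with nonnegative parts. -/
def IsPart (n : ℕ) (lam : Fin n → ℤ) : Prop :=
  (∀ i j : Fin n, i ≤ j → lam j ≤ lam i) ∧ ∀ i, 0 ≤ lam i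

instance (n : ℕ) (lam : Fin n → ℤ) : Decidable (IsPart n lam) := by
  unfold IsPart; infer_instance

/-- The cone `Λ` of partitions with at most `n` parts. -/
def Lam (n : ℕ) := {lam : Fin n → ℤ // IsPart n lam}

/-- `λ + e_{J+} - e_{J-}`. -/
def shift (n : ℕ) (lam : Fin n → ℤ) (Jp Jm : Finset (Fin n)) : Fin n → ℤ :=
  fun i => lam i + (if i ∈ Jp then 1 else 0) - (if i ∈ Jm then 1 else 0)

/-- `ε_j(J+, J-)`. -/
def eps (n : ℕ) (Jp Jm : Finset (Fin n)) (i : Fin n) : ℤ :=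
  if i ∈ Jp then 1 else if i ∈ Jm then -1 else 0

/-- the exponent `n - j` in paper indexing (`j = (i : ℕ) + 1`). -/
def en (n : ℕ) (i : Fin n) : ℤ := (n : ℤ) - (i : ℤ) - 1

/-- `t^{n-j}` in paper indexing. -/
def tn (n : ℕ) (t : ℂ) (i : Fin n) : ℂ := t ^ en n i

/-- the ratio `(1-t^{1+k-j})/(1-t^{k-j})` in paper indexing. -/
def rat (n : ℕ) (t : ℂ) (j k : Fin n) : ℂ :=
  (1 - t ^ ((k : ℤ) - (j : ℤ) + 1)) / (1 - t ^ ((k : ℤ) - (j : ℤ)))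

/-- `∏_{1 ≤ j < k ≤ n, λ_j = λ_k, ε_j > ε_k} (1-t^{1+k-j})/(1-t^{k-j})`. -/
def pairProd (n : ℕ) (t : ℂ) (lam : Fin n → ℤ) (Jp Jm : Finset (Fin n)) : ℂ :=
  ∏ j : Fin n, ∏ k : Fin n,
    if j < k ∧ lam j = lam k ∧ eps n Jp Jm j > eps n Jp Jm k then rat n t j k else 1

/-- the coefficient `W_{J+,J-}(λ)` (three-parameter case). -/
def W3 (n : ℕ) (t t0 t1 t2 : ℂ) (lam : Fin n → ℤ) (Jp Jm : Finset (Fin n)) : ℂ :=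
  (∏ j ∈ Jp, if lam j = 0 then
      (1 - t0 * t1 * tn n t j) * (1 - t0 * t2 * tn n t j) * (1 - t1 * t2 * tn n t j) else 1)
  * pairProd n t lam Jp Jm

/-- the coefficient `U_{K,m}(λ)` (three-parameter case). -/
def U3 (n : ℕ) (t t0 t1 t2 : ℂ) (K : Finset (Fin n)) (m : ℕ) (lam : Fin n → ℤ) : ℂ :=
  (-1 : ℂ) ^ m *
  ∑ p ∈ (univ : Finset (Finset (Fin n) × Finset (Fin n))).filter
      (fun p => p.1 ⊆ K ∧ p.2 ⊆ K ∧ Disjoint p.1 p.2 ∧ p.1.card + p.2.card = m),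
    (∏ j ∈ p.1, if lam j = 0 then (1 - t0 * t1 * tn n t j) * (1 - t0 * t2 * tn n t j) else 1) *
    (∏ j ∈ p.2, if lam j = 1 then 1 - t1 * t2 * tn n t j else 1) *
    (∏ j ∈ K, ∏ k ∈ K,
        if lam j = lam k ∧ eps n p.1 p.2 j > eps n p.1 p.2 k then rat n t j k else 1) *
    (∏ j ∈ p.2, ∏ k ∈ p.1, if lam j = lam k + 1 then rat n t j k else 1) *
    (∏ j ∈ K, t0 ^ (-(eps n p.1 p.2 j))) *
    (∏ j ∈ K, ∏ k ∈ K,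
        if j < k ∧ eps n p.1 p.2 j ≠ eps n p.1 p.2 k ∧ eps n p.1 p.2 k = 0
        then t ^ (-(eps n p.1 p.2 j)) else 1) *
    (∏ j ∈ K, ∏ k ∈ K,
        if j < k ∧ lam j = lam k ∧ eps n p.1 p.2 k - eps n p.1 p.2 j = 1 then t⁻¹ else 1)

/-- the difference operator `H_l` (three-parameter case). -/
def H3 (n : ℕ) (t t0 t1 t2 : ℂ) (l : ℕ) (f : Lam n → ℂ) : Lam n → ℂ := fun lam =>
  ∑ p ∈ (univ : Finset (Finset (Fin n) × Finset (Fin n))).filter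
      (fun p => Disjoint p.1 p.2 ∧ p.1.card + p.2.card ≤ l),
    if h : IsPart n (shift n lam.1 p.1 p.2) then
      U3 n t t0 t1 t2 (p.1ᶜ ∩ p.2ᶜ) (l - (p.1.card + p.2.card)) lam.1 *
      W3 n t t0 t1 t2 lam.1 p.1 p.2 * f ⟨_, h⟩
    else 0

/-- the Pieri coefficient `V_{J+,J-}(λ)` (three-parameter case). -/
def V3 (n : ℕ) (t t0 t1 t2 : ℂ) (lam : Fin n → ℤ) (Jp Jm : Finset (Fin n)) : ℂ :=
  (∏ j ∈ Jp, if lam j = 0 then (1 - t0 * t1 * tn n t j) * (1 - t0 * t2 * tn n t j) else 1) *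
  (∏ j ∈ Jm, if lam j = 1 then 1 - t1 * t2 * tn n t j else 1) *
  pairProd n t lam Jp Jm *
  ∏ j : Fin n, t0 ^ (-(eps n Jp Jm j)) * t ^ (-(en n j * eps n Jp Jm j))

/-- the gauge function `h(λ)` (three-parameter case). -/
def h3 (n : ℕ) (t t0 t1 t2 : ℂ) (lam : Fin n → ℤ) : ℂ :=
  ∏ j : Fin n, if 0 < lam j then
    t0 ^ (lam j) * t ^ (en n j * lam j) * (1 - t1 * t2 * tn n t j) else 1

/-- action of the hyperoctahedral group `W_n = S_n ⋉ {-1,1}^n` on `ξ ∈ ℂ^n`. -/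
def act (n : ℕ) (w : Equiv.Perm (Fin n) × (Fin n → Bool)) (xi : Fin n → ℂ) : Fin n → ℂ :=
  fun j => (if w.2 j then -1 else 1) * xi (w.1 j)

/-- the factor `C_λ(ξ)`. -/
def Cf (n : ℕ) (t t0 t1 t2 t3 : ℂ) (lam : Fin n → ℤ) (xi : Fin n → ℂ) : ℂ :=
  (∏ j : Fin n, ∏ k : Fin n, if j < k then
      ((1 - t * exp (I * (xi j - xi k))) * (1 - t * exp (I * (xi j + xi k)))) /
      ((1 - exp (I * (xi j - xi k))) * (1 - exp (I * (xi j + xi k)))) else 1) *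
  ∏ j : Fin n, if 0 < lam j then
      ((1 - t0 * exp (I * xi j)) * (1 - t1 * exp (I * xi j)) *
       (1 - t2 * exp (I * xi j)) * (1 - t3 * exp (I * xi j))) / (1 - exp (2 * I * xi j))
    else 1

/-- the normalization constant `c_λ`. -/
def ccf (n : ℕ) (t t0 t1 t2 t3 : ℂ) (lam : Fin n → ℤ) : ℂ :=
  ∏ j : Fin n,
    (t0 ^ (lam j) * t ^ (en n j * lam j) * (1 - t)) /
    ((1 - t ^ ((j : ℤ) + 1)) * (if lam j = 0 then 1 + tn n t j else 1) *
     (if lam j = 0 then 1 else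
        (1 - t0 * t1 * tn n t j) * (1 - t0 * t2 * tn n t j) * (1 - t0 * t3 * tn n t j)))

/-- the hyperoctahedral Hall–Littlewood function `P_λ(ξ)`. -/
def P (n : ℕ) (t t0 t1 t2 t3 : ℂ) (lam : Fin n → ℤ) (xi : Fin n → ℂ) : ℂ :=
  ccf n t t0 t1 t2 t3 lam *
  ∑ w : Equiv.Perm (Fin n) × (Fin n → Bool),
    Cf n t t0 t1 t2 t3 lam (act n w xi) *
    exp (-I * ∑ j : Fin n, (lam j : ℂ) * act n w xi j)

/-- the symmetric function `E_l(ξ)` (eigenvalue). -/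
def E (n : ℕ) (t t0 : ℂ) (l : ℕ) (xi : Fin n → ℂ) : ℂ :=
  ∑ S ∈ Finset.powersetCard l (univ : Finset (Fin n)),
    if h : S.card = l then
      ∏ k : Fin l,
        (2 * Complex.cos (xi ((S.orderIsoOfFin h k).1)) -
         t0 * t ^ ((((S.orderIsoOfFin h k).1 : ℕ) : ℤ) - (k : ℤ)) -
         t0⁻¹ * t ^ (-((((S.orderIsoOfFin h k).1 : ℕ) : ℤ) - (k : ℤ))))
    else 0

/-- `ξ` is generic: all factors `C_μ(wξ)` are defined (no vanishing denominators). -/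
def Generic (n : ℕ) (xi : Fin n → ℂ) : Prop :=
  ∀ w : Equiv.Perm (Fin n) × (Fin n → Bool),
    (∀ j k : Fin n, j < k →
      1 - exp (I * (act n w xi j - act n w xi k)) ≠ 0 ∧
      1 - exp (I * (act n w xi j + act n w xi k)) ≠ 0) ∧
    ∀ j : Fin n, 1 - exp (2 * I * act n w xi j) ≠ 0

/-- the weight function `Δ(ξ)`. -/
def Dlt (n : ℕ) (t t0 t1 t2 t3 : ℂ) (xi : Fin n → ℂ) : ℂ :=
  (∏ j : Fin n, ∏ k : Fin n, if j < k then
      ((1 - exp (I * (xi j - xi k))) * (1 - exp (I * (xi j + xi k)))) /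
      ((1 - t * exp (I * (xi j - xi k))) * (1 - t * exp (I * (xi j + xi k)))) else 1) *
  ∏ j : Fin n, (1 - exp (2 * I * xi j)) /
    ((1 - t0 * exp (I * xi j)) * (1 - t1 * exp (I * xi j)) *
     (1 - t2 * exp (I * xi j)) * (1 - t3 * exp (I * xi j)))

/-- `m_0(λ)`. -/
def m0c (n : ℕ) (lam : Fin n → ℤ) : ℕ := (univ.filter fun j => lam j = 0).card

/-- `m_1(λ)`. -/
def m1c (n : ℕ) (lam : Fin n → ℤ) : ℕ := (univ.filter fun j => lam j = 1).card

/-- `m_1^+(λ)` relative to `J_+`. -/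
def m1p (n : ℕ) (lam : Fin n → ℤ) (Jp : Finset (Fin n)) : ℕ :=
  (Jp.filter fun j => lam j = 1).card

/-- the Pieri coefficient `V_{J+,J-}(λ)` (four-parameter case). -/
def V4 (n : ℕ) (t t0 t1 t2 t3 : ℂ) (lam : Fin n → ℤ) (Jp Jm : Finset (Fin n)) : ℂ :=
  (∏ j ∈ Jp, if lam j = 0 then
      ((1 - t0*t1*t2*t3 * t ^ (en n j + (m0c n lam : ℤ) + (m1c n lam : ℤ) - (m1p n lam Jp : ℤ))) *
       ((1 - t0 * t1 * tn n t j) * (1 - t0 * t2 * tn n t j) * (1 - t0 * t3 * tn n t j))) /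
      ((1 - t0*t1*t2*t3 * t ^ (2 * en n j)) * (1 - t0*t1*t2*t3 * t ^ (2 * en n j + 1)))
    else 1) *
  (∏ j ∈ Jp, if lam j = 1 then 1 - t0*t1*t2*t3 * t ^ (en n j + (m0c n lam : ℤ)) else 1) *
  (∏ j ∈ Jm, if lam j = 1 then
      ((1 - t0*t1*t2*t3 * t ^ (en n j - 1)) *
       ((1 - t1 * t2 * tn n t j) * (1 - t1 * t3 * tn n t j) * (1 - t2 * t3 * tn n t j))) /
      ((1 - t0*t1*t2*t3 * t ^ (2 * en n j)) * (1 - t0*t1*t2*t3 * t ^ (2 * en n j - 1)))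
    else 1) *
  pairProd n t lam Jp Jm *
  ∏ j : Fin n, t0 ^ (-(eps n Jp Jm j)) * t ^ (-(en n j * eps n Jp Jm j))

/-- the coefficient `U_{K,m}(λ)` (four-parameter case). -/
def U4 (n : ℕ) (t t0 t1 t2 t3 : ℂ) (K : Finset (Fin n)) (m : ℕ) (lam : Fin n → ℤ) : ℂ :=
  (-1 : ℂ) ^ m *
  ∑ p ∈ (univ : Finset (Finset (Fin n) × Finset (Fin n))).filter
      (fun p => p.1 ⊆ K ∧ p.2 ⊆ K ∧ Disjoint p.1 p.2 ∧ p.1.card + p.2.card = m),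
    (∏ j ∈ p.1, if lam j = 0 then
        ((1 - t0 * t1 * tn n t j) * (1 - t0 * t2 * tn n t j) * (1 - t0 * t3 * tn n t j)) /
        (1 - t0*t1*t2*t3 * t ^ (2 * en n j)) else 1) *
    (∏ j ∈ p.1, if lam j = 1 then 1 - t0*t1*t2*t3 * t ^ (en n j) else 1) *
    (∏ j ∈ p.2, if lam j = 1 then
        ((1 - t1 * t2 * tn n t j) * (1 - t1 * t3 * tn n t j) * (1 - t2 * t3 * tn n t j)) /
        (1 - t0*t1*t2*t3 * t ^ (2 * en n j)) else 1) *
    (∏ j ∈ K, ∏ k ∈ K,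
        if j < k ∧ (eps n p.1 p.2 j + eps n p.1 p.2 k = -2 ∨ eps n p.1 p.2 j + eps n p.1 p.2 k = 1 ∨
              eps n p.1 p.2 j + eps n p.1 p.2 k = 2) ∧
           lam j = 1 ∧ lam k = (if eps n p.1 p.2 k = -1 then 1 else 0)
        then (1 - t0*t1*t2*t3 * t ^ (2 * (n : ℤ) + 1 - ((j : ℤ) + 1) - ((k : ℤ) + 1))) /
             (1 - t0*t1*t2*t3 * t ^ (2 * (n : ℤ) - ((j : ℤ) + 1) - ((k : ℤ) + 1))) else 1) *
    (∏ j ∈ p.1 ∪ p.2, ∏ k ∈ K \ p.2,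
        if j < k ∧ (eps n p.1 p.2 k - eps n p.1 p.2 j = 0 ∨ eps n p.1 p.2 k - eps n p.1 p.2 j = 1) ∧
           lam j = (if eps n p.1 p.2 j = -1 then 1 else 0) ∧ lam k = 0
        then (1 - t0*t1*t2*t3 * t ^ (2 * (n : ℤ) - 1 - ((j : ℤ) + 1) - ((k : ℤ) + 1))) /
             (1 - t0*t1*t2*t3 * t ^ (2 * (n : ℤ) - ((j : ℤ) + 1) - ((k : ℤ) + 1))) else 1) *
    (∏ j ∈ K, ∏ k ∈ K,
        if lam j = lam k ∧ eps n p.1 p.2 j > eps n p.1 p.2 k then rat n t j k else 1) *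
    (∏ j ∈ p.2, ∏ k ∈ p.1, if lam j = lam k + 1 then rat n t j k else 1) *
    (∏ j ∈ K, t0 ^ (-(eps n p.1 p.2 j))) *
    (∏ j ∈ K, ∏ k ∈ K,
        if j < k ∧ eps n p.1 p.2 j ≠ eps n p.1 p.2 k ∧ eps n p.1 p.2 k = 0
        then t ^ (-(eps n p.1 p.2 j)) else 1) *
    (∏ j ∈ K, ∏ k ∈ K,
        if j < k ∧ lam j = lam k ∧ eps n p.1 p.2 k - eps n p.1 p.2 j = 1 then t⁻¹ else 1)

/-- the coefficient `W_{J+,J-}(λ)` (four-parameter case). -/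
def W4 (n : ℕ) (t t0 t1 t2 t3 : ℂ) (lam : Fin n → ℤ) (Jp Jm : Finset (Fin n)) : ℂ :=
  (∏ j ∈ Jp, if lam j = 1 then 1 - t0*t1*t2*t3 * t ^ (en n j + (m0c n lam : ℤ)) else 1) *
  pairProd n t lam Jp Jm *
  ∏ j ∈ Jp, if lam j = 0 then
    ((1 - t0*t1*t2*t3 * t ^ (en n j - 1)) *
     (1 - t0*t1*t2*t3 * t ^ (en n j + (m0c n lam : ℤ) + (m1c n lam : ℤ) - (m1p n lam Jp : ℤ))) *
     ((1 - t0 * t1 * tn n t j) * (1 - t0 * t2 * tn n t j) * (1 - t0 * t3 * tn n t j) *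
      (1 - t1 * t2 * tn n t j) * (1 - t1 * t3 * tn n t j) * (1 - t2 * t3 * tn n t j))) /
    ((1 - t0*t1*t2*t3 * t ^ (2 * en n j - 1)) * (1 - t0*t1*t2*t3 * t ^ (2 * en n j)) ^ 2 *
     (1 - t0*t1*t2*t3 * t ^ (2 * en n j + 1)))
  else 1

/-- the difference operator `H_l` (four-parameter case). -/
def H4 (n : ℕ) (t t0 t1 t2 t3 : ℂ) (l : ℕ) (f : Lam n → ℂ) : Lam n → ℂ := fun lam =>
  ∑ p ∈ (univ : Finset (Finset (Fin n) × Finset (Fin n))).filter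
      (fun p => Disjoint p.1 p.2 ∧ p.1.card + p.2.card ≤ l),
    if h : IsPart n (shift n lam.1 p.1 p.2) then
      U4 n t t0 t1 t2 t3 (p.1ᶜ ∩ p.2ᶜ) (l - (p.1.card + p.2.card)) lam.1 *
      W4 n t t0 t1 t2 t3 lam.1 p.1 p.2 * f ⟨_, h⟩
    else 0

/-- the gauge function `h(λ)` (four-parameter case). -/
def h4 (n : ℕ) (t t0 t1 t2 t3 : ℂ) (lam : Fin n → ℤ) : ℂ :=
  ∏ j : Fin n,
    t0 ^ (lam j) * t ^ (en n j * lam j) *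
    (if lam j = 0 then 1 - t0*t1*t2*t3 * t ^ (en n j + (m0c n lam : ℤ) - 1) else 1) *
    (if lam j = 0 then 1 else
      (1 - t1 * t2 * tn n t j) * (1 - t1 * t3 * tn n t j) * (1 - t2 * t3 * tn n t j))

/-- the box `[0, 2π]^n`. -/
def box (n : ℕ) : Set (Fin n → ℝ) := Set.univ.pi fun _ => Set.Icc 0 (2 * Real.pi)


/-- the weighted measure `|Δ(ξ)|² dξ` on the box `[0,2π]^n`. -/
def wmeas (n : ℕ) (t t0 t1 t2 t3 : ℝ) : Measure (Fin n → ℝ) :=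
  ((volume : Measure (Fin n → ℝ)).restrict (box n)).withDensity
    fun xi => ENNReal.ofReal
      ((‖(Dlt n (t : ℂ) (t0 : ℂ) (t1 : ℂ) (t2 : ℂ) (t3 : ℂ)
        (fun j => (xi j : ℂ)))‖) ^ 2)

/-- the normalization integral `∫_{[0,2π]^n} |P_λ(ξ) Δ(ξ)|² dξ`. -/
def nInt (n : ℕ) (t t0 t1 t2 t3 : ℝ) (lam : Fin n → ℤ) : ℝ :=
  ∫ xi in box n,
    (‖(P n (t : ℂ) (t0 : ℂ) (t1 : ℂ) (t2 : ℂ) (t3 : ℂ) lam (fun j => (xi j : ℂ)) *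
      Dlt n (t : ℂ) (t0 : ℂ) (t1 : ℂ) (t2 : ℂ) (t3 : ℂ) (fun j => (xi j : ℂ)))‖) ^ 2


/-- the functional relation `V_{J+,J-}(λ) h(λ+e_{J+}-e_{J-}) = W_{J+,J-}(λ) h(λ)`
(three-parameter case). -/
theorem functional_relation (n : ℕ) (hn : 1 ≤ n) (t t0 t1 t2 : ℂ)
    (ht : t ≠ 0) (ht0 : t0 ≠ 0) (htm : ∀ m : ℕ, 1 ≤ m → m ≤ n → t ^ m ≠ 1)
    (lam : Fin n → ℤ) (hlam : IsPart n lam) (Jp Jm : Finset (Fin n))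
    (hdisj : Disjoint Jp Jm) (hshift : IsPart n (shift n lam Jp Jm)) :
    V3 n t t0 t1 t2 lam Jp Jm * h3 n t t0 t1 t2 (shift n lam Jp Jm) =
      W3 n t t0 t1 t2 lam Jp Jm * h3 n t t0 t1 t2 lam := by
  have hJ : ∀ (J : Finset (Fin n)) (f : Fin n → ℂ),
      ∏ j ∈ J, f j = ∏ j : Fin n, if j ∈ J then f j else 1 := by
    intro J f
    simp [Finset.prod_ite_mem]
  unfold V3 W3 h3
  have key : ∀ (a b p e h c h' : ℂ), a * b * e * h = c * h' →
      a * b * p * e * h = c * p * h' := by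
    intro a b p e h c h' H
    linear_combination p * H
  apply key
  rw [hJ Jp, hJ Jm, hJ Jp, ← Finset.prod_mul_distrib, ← Finset.prod_mul_distrib,
    ← Finset.prod_mul_distrib, ← Finset.prod_mul_distrib]
  apply Finset.prod_congr rfl
  intro j _
  have h0 := hlam.2 j
  have h1 := hshift.2 j
  have hd : j ∈ Jp → j ∉ Jm := fun h h' => Finset.disjoint_left.mp hdisj h h'
  generalize 1 - t0 * t1 * tn n t j = A
  generalize 1 - t0 * t2 * tn n t j = B
  generalize 1 - t1 * t2 * tn n t j = C
  have hz : ∀ e l : ℤ, t0 ^ (-e) * t ^ (-(en n j * e)) *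
      (t0 ^ (l + e) * t ^ (en n j * (l + e))) = t0 ^ l * t ^ (en n j * l) := by
    intro e l
    rw [mul_add, zpow_add₀ ht0, zpow_add₀ ht, zpow_neg, zpow_neg]
    have a1 := zpow_ne_zero e ht0
    have a2 := zpow_ne_zero (en n j * e) ht
    field_simp
  simp only [shift, eps] at h1 ⊢
  by_cases hp : j ∈ Jp
  · have hm := hd hp
    simp only [hp, hm, if_true, if_false, sub_zero] at h1 ⊢
    have hz1 := hz 1 (lam j)
    rw [if_pos (by omega : 0 < lam j + 1)]
    by_cases hl : lam j = 0
    · simp only [hl] at hz1 ⊢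
      simp only [if_true, lt_irrefl, if_false]
      simp only [mul_zero, zpow_zero] at hz1
      linear_combination (A * B * C) * hz1
    · rw [if_neg hl, if_neg hl, if_pos (by omega : 0 < lam j)]
      linear_combination C * hz1
  · by_cases hm : j ∈ Jm
    · simp only [hp, hm, if_true, if_false, add_zero] at h1 ⊢
      have hz1 := hz (-1) (lam j)
      by_cases hl : lam j = 1
      · simp only [hl] at hz1 ⊢
        norm_num at hz1 ⊢
        linear_combination C * hz1
      · rw [if_neg hl, if_pos (by omega : 0 < lam j), if_pos (by omega : 0 < lam j - 1)]
        rw [← sub_eq_add_neg] at hz1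
        linear_combination C * hz1
    · simp [hp, hm]

end QB

end
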